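/- The infinite series identity 10·2^{1/3} = Σ_{k=0}^{∞} (-1/4)^k · [(1/12)_k (7/12)_k (2/3)_k] / [(11/12)_k (1)_k (17/12)_k] · (60k + 13) holds, where 2^{1/3} denotes the real cube root of 2, the sum is over natural numbers k, and all quantities are real numbers. -/

import Mathlib

noncomputable def risingFactorial (a : ℝ) (k : ℕ) : ℝ := ∏ i ∈ Finset.range k, (a + i)

noncomputable section

lemma rf_zero (a : ℝ) : risingFactorial a 0 = 1 := by simp [risingFactorial]

lemma rf_succ (a : ℝ) (k : ℕ) : risingFactorial a (k+1) = risingFactorial a k * (a + k) := by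
  simp [risingFactorial, Finset.prod_range_succ]

lemma rf_pos (a : ℝ) (ha : 0 < a) (k : ℕ) : 0 < risingFactorial a k := by
  unfold risingFactorial
  exact Finset.prod_pos (fun i _ => by positivity)

/-- The term of the Gauss series. -/
def gaussT (c : ℝ) (k : ℕ) : ℝ := risingFactorial (1/3) k * risingFactorial (1/6) k / (risingFactorial 1 k * risingFactorial c k)

lemma gaussT_pos (c : ℝ) (hc : 0 < c) (k : ℕ) : 0 < gaussT c k := by
  unfold gaussT
  have h1 := rf_pos (1/3) (by norm_num) k
  have h2 := rf_pos (1/6) (by norm_num) k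
  have h3 := rf_pos 1 (by norm_num) k
  have h4 := rf_pos c hc k
  positivity

lemma gaussT_succ (c : ℝ) (hc : 0 < c) (k : ℕ) :
    gaussT c (k+1) = gaussT c k * ((1/3 + k) * (1/6 + k) / ((1 + k) * (c + k))) := by
  unfold gaussT
  have h3 := (rf_pos 1 (by norm_num) k).ne'
  have h4 := (rf_pos c hc k).ne'
  have h5 : (1 + (k:ℝ)) ≠ 0 := by positivity
  have h6 : (c + (k:ℝ)) ≠ 0 := by positivity
  simp only [rf_succ]
  field_simp

lemma gaussT_shift (c : ℝ) (hc : 0 < c) (k : ℕ) :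
    gaussT (c+1) k = gaussT c k * (c / (c + k)) := by
  induction k with
  | zero => simp [gaussT, rf_zero, hc.ne']
  | succ k ih =>
    rw [gaussT_succ _ (by positivity), gaussT_succ _ hc, ih]
    have h5 : (1 + (k:ℝ)) ≠ 0 := by positivity
    have h6 : (c + (k:ℝ)) ≠ 0 := by positivity
    have h7 : (c + 1 + (k:ℝ)) ≠ 0 := by positivity
    have h8 : (c + ((k:ℝ) + 1)) ≠ 0 := by positivity
    push_cast
    field_simp
    ring

lemma gaussT_anti (c : ℝ) (hc : 0 < c) (k : ℕ) : gaussT (c+1) k ≤ gaussT c k := by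
  rw [gaussT_shift c hc]
  have := gaussT_pos c hc k
  have h : c / (c + k) ≤ 1 := by
    rw [div_le_one (by positivity)]
    have : (0:ℝ) ≤ k := by positivity
    linarith
  nlinarith

lemma gaussT_le (N k : ℕ) : gaussT (5/6 + N) k ≤ gaussT (5/6) k := by
  induction N with
  | zero => simp
  | succ N ih =>
    refine le_trans ?_ ih
    have := gaussT_anti (5/6 + N) (by positivity) k
    push_cast
    rwa [← add_assoc]

lemma gaussT_cube (k : ℕ) : gaussT (5/6) k ^ 3 * ((k:ℝ) + 1) ^ 4 ≤ 1 := by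
  induction k with
  | zero => simp [gaussT, rf_zero]
  | succ k ih =>
    rw [gaussT_succ _ (by norm_num)]
    refine le_trans ?_ ih
    have hp := gaussT_pos (5/6) (by norm_num) k
    have hk : (0:ℝ) ≤ k := by positivity
    push_cast
    rw [mul_pow, mul_assoc]
    refine mul_le_mul_of_nonneg_left ?_ (by positivity)
    rw [div_pow, div_mul_eq_mul_div, div_le_iff₀ (by positivity)]
    generalize (k:ℝ) = x at hk
    have e1 : (1/3 + x)^3 * (x+1+1)^2 ≤ (1+x)^5 := by
      have : 0 ≤ (1+x)^5 - (1/3 + x)^3 * (x+1+1)^2 := by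
        ring_nf; positivity
      linarith
    have e2 : (1/6 + x)^3 * (x+1+1)^2 ≤ (5/6+x)^3 * (1+x)^2 := by
      have : 0 ≤ (5/6+x)^3 * (1+x)^2 - (1/6 + x)^3 * (x+1+1)^2 := by
        ring_nf; positivity
      linarith
    calc ((1/3 + x) * (1/6+x))^3 * (x+1+1)^4
        = ((1/3 + x)^3 * (x+1+1)^2) * ((1/6 + x)^3 * (x+1+1)^2) := by ring
      _ ≤ (1+x)^5 * ((5/6+x)^3 * (1+x)^2) := by gcongr
      _ = (x+1)^4 * ((1+x)*(5/6+x))^3 := by ring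

lemma gaussT_bound (k : ℕ) : gaussT (5/6) k ≤ 1 / ((k:ℝ) + 1) ^ ((4:ℝ)/3) := by
  have h := gaussT_cube k
  have hp := gaussT_pos (5/6) (by norm_num) k
  have hk : (0:ℝ) < (k:ℝ) + 1 := by positivity
  refine le_of_pow_le_pow_left₀ (n := 3) (by norm_num) (by positivity) ?_
  have e : (((k:ℝ) + 1) ^ ((4:ℝ)/3))^3 = ((k:ℝ)+1)^4 := by
    rw [← Real.rpow_natCast, ← Real.rpow_mul hk.le, ← Real.rpow_natCast]
    norm_num
  rw [div_pow, e, one_pow, le_div_iff₀ (by positivity)]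
  exact h

lemma gaussT_summable : Summable (gaussT (5/6)) := by
  have h : Summable (fun k : ℕ => 1 / ((k:ℝ)) ^ ((4:ℝ)/3)) :=
    Real.summable_one_div_nat_rpow.2 (by norm_num)
  have h2 := (summable_nat_add_iff 1).2 h
  refine Summable.of_nonneg_of_le (fun k => (gaussT_pos _ (by norm_num) k).le) (fun k => ?_) h2
  have := gaussT_bound k
  push_cast
  exact this

lemma gaussT_lim : Filter.Tendsto (fun k : ℕ => ((k:ℝ)+1) * gaussT (5/6) k) Filter.atTop (nhds 0) := by
  have h : Filter.Tendsto (fun k : ℕ => ((k:ℝ)+1) ^ (-((1:ℝ)/3))) Filter.atTop (nhds 0) :=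
    (tendsto_rpow_neg_atTop (by norm_num)).comp
      (Filter.tendsto_atTop_add_const_right _ _ tendsto_natCast_atTop_atTop)
  refine squeeze_zero (fun k => ?_) (fun k => ?_) h
  · have := gaussT_pos (5/6) (by norm_num) k
    positivity
  · have hk : (0:ℝ) < (k:ℝ) + 1 := by positivity
    calc ((k:ℝ)+1) * gaussT (5/6) k ≤ ((k:ℝ)+1) * (1 / ((k:ℝ) + 1) ^ ((4:ℝ)/3)) := by
          gcongr; exact gaussT_bound k
      _ = _ := by
          rw [show -((1:ℝ)/3) = 1 - 4/3 by norm_num, Real.rpow_sub hk, Real.rpow_one]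
          ring

lemma gaussT_summable' (N : ℕ) : Summable (gaussT (5/6 + N)) :=
  Summable.of_nonneg_of_le (fun k => (gaussT_pos _ (by positivity) k).le) (gaussT_le N) gaussT_summable

/-- telescoping sums -/
lemma tele (f U : ℕ → ℝ) (hf : Summable f) (h : ∀ k, f k = U (k+1) - U k)
    (hU : Filter.Tendsto U Filter.atTop (nhds 0)) : ∑' k, f k = - U 0 := by
  have h1 := hf.hasSum.tendsto_sum_nat
  have h2 : ∀ n, ∑ i ∈ Finset.range n, f i = U n - U 0 := by
    intro n
    simp_rw [h]
    exact Finset.sum_range_sub U n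
  simp_rw [h2] at h1
  have h3 := hU.sub_const (U 0)
  rw [zero_sub] at h3
  exact tendsto_nhds_unique h1 h3

lemma gauss_gen (a b c p q m x t : ℝ) (hp : p = c - a) (hq : q = c - b) (hm : m = c - a - b)
    (hc : c ≠ 0) (hx : c + x ≠ 0) (h1 : 1 + x ≠ 0) :
    m * t - (p * q / c) * (t * (c / (c + x))) =
      -(x + 1) * (t * ((a + x) * (b + x) / ((1 + x) * (c + x)))) - -x * t := by
  subst hp hq hm
  rw [add_comm x 1]
  field_simp
  ring

lemma gauss_step (N : ℕ) :
    ∑' k, gaussT (5/6 + N) k =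
      ((1/2 + N) * (2/3 + N) / ((5/6 + N) * (1/3 + N))) * ∑' k, gaussT (5/6 + (N+1 : ℕ)) k := by
  have s1 := gaussT_summable' N
  have s2 := gaussT_summable' (N+1)
  have hc : (0:ℝ) < 5/6 + N := by positivity
  have hd : (0:ℝ) < 1/3 + N := by positivity
  have key := tele (fun k => (1/3 + N) * gaussT (5/6+N) k
      - ((1/2 + N) * (2/3 + N) / (5/6 + N)) * gaussT (5/6 + (N+1:ℕ)) k)
    (fun k => - k * gaussT (5/6+N) k)
    ((s1.mul_left _).sub (s2.mul_left _)) ?_ ?_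
  · rw [(s1.mul_left _).tsum_sub (s2.mul_left _), tsum_mul_left, tsum_mul_left] at key
    simp only [Nat.cast_zero, neg_zero, zero_mul] at key
    have k2 := sub_eq_zero.1 key
    generalize (∑' k, gaussT (5/6 + N) k) = X at *
    generalize (∑' k, gaussT (5/6 + (N+1:ℕ)) k) = Y at *
    have e : (1/3 + (N:ℝ)) * X = (1/3 + (N:ℝ)) *
        ((1/2 + N) * (2/3 + N) / ((5/6 + N) * (1/3 + N)) * Y) := by
      rw [k2, mul_comm (5/6 + (N:ℝ)), ← div_div]
      have := hd.ne'
      generalize (1/3 + (N:ℝ)) = D at *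
      generalize (5/6 + (N:ℝ)) = E at *
      field_simp
    exact mul_left_cancel₀ hd.ne' e
  · intro k
    have h6 : (5/6 + (N:ℝ) + (k:ℝ)) ≠ 0 := by positivity
    have h5 : (1 + (k:ℝ)) ≠ 0 := by positivity
    rw [show (5/6 + ((N+1:ℕ):ℝ)) = (5/6 + N) + 1 by push_cast; ring, gaussT_shift _ hc,
      gaussT_succ _ hc]
    push_cast
    exact gauss_gen (1/3) (1/6) (5/6+N) _ _ _ k _ (by ring) (by ring) (by ring) hc.ne' h6 h5
  · rw [tendsto_zero_iff_abs_tendsto_zero]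
    refine squeeze_zero (fun k => abs_nonneg _) (fun k => ?_) gaussT_lim
    have a1 := gaussT_le N k
    have a2 := gaussT_pos (5/6+N) hc k
    rw [Function.comp, abs_mul, abs_neg, Nat.abs_cast, abs_of_pos a2]
    gcongr
    linarith

lemma gauss_iter (N : ℕ) :
    ∑' k, gaussT (5/6) k =
      (risingFactorial (1/2) N * risingFactorial (2/3) N / (risingFactorial (5/6) N * risingFactorial (1/3) N)) * ∑' k, gaussT (5/6 + N) k := by
  induction N with
  | zero => simp [rf_zero]
  | succ N ih =>
    rw [ih, gauss_step N]
    simp only [rf_succ]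
    rw [← mul_assoc, div_mul_div_comm]
    congr 2 <;> ring

lemma gauss_tail : Filter.Tendsto (fun N : ℕ => ∑' k, gaussT (5/6 + N) k) Filter.atTop (nhds 1) := by
  have e : ∑' k : ℕ, (if k = 0 then (1:ℝ) else 0) = 1 := by simp
  rw [← e]
  refine tendsto_tsum_of_dominated_convergence gaussT_summable (fun k => ?_)
    (Filter.Eventually.of_forall fun N k => ?_)
  · rcases k with _ | k
    · simp [gaussT, rf_zero]
    · simp only [Nat.add_eq_zero_iff, one_ne_zero, and_false, if_false]
      have hl : Filter.Tendsto (fun N : ℕ => gaussT (5/6) 0 * 0 + (risingFactorial (1/3) (k+1) * risingFactorial (1/6) (k+1) / risingFactorial 1 (k+1) / risingFactorial 1 k) * ((5/6 + N : ℝ))⁻¹)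
          Filter.atTop (nhds 0) := by
        have : Filter.Tendsto (fun N : ℕ => ((5/6 + N : ℝ))⁻¹) Filter.atTop (nhds 0) :=
          tendsto_inv_atTop_zero.comp
            (Filter.tendsto_atTop_add_const_left _ _ tendsto_natCast_atTop_atTop)
        simpa using this.const_mul (risingFactorial (1/3) (k+1) * risingFactorial (1/6) (k+1) / risingFactorial 1 (k+1) / risingFactorial 1 k)
      refine tendsto_of_tendsto_of_tendsto_of_le_of_le' tendsto_const_nhds hl
        (Filter.Eventually.of_forall fun N => (gaussT_pos _ (by positivity) _).le) ?_
      filter_upwards [Filter.eventually_ge_atTop 1] with N hN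
      have h1 : risingFactorial 1 k * (5/6 + N) ≤ risingFactorial (5/6 + N) (k+1) := by
        unfold risingFactorial
        rw [Finset.prod_range_succ']
        have hN' : (1:ℝ) ≤ N := by exact_mod_cast hN
        simp only [Nat.cast_zero, add_zero]
        refine mul_le_mul_of_nonneg_right ?_ (by positivity)
        refine Finset.prod_le_prod (fun i _ => by positivity) (fun i _ => ?_)
        push_cast
        linarith
      have h3 := rf_pos 1 (by norm_num) k
      have h4 := rf_pos 1 (by norm_num) (k+1)
      have h5 := rf_pos (1/3) (by norm_num) (k+1)
      have h6 := rf_pos (1/6) (by norm_num) (k+1)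
      unfold gaussT
      rw [mul_zero, zero_add, ← div_eq_mul_inv, div_div, div_div]
      gcongr
  · rw [Real.norm_of_nonneg (gaussT_pos _ (by positivity) k).le]
    exact gaussT_le N k

lemma rf_gammaSeq (a : ℝ) (n : ℕ) : Real.GammaSeq a n = (n:ℝ)^a * n.factorial / risingFactorial a (n+1) := rfl

lemma gauss_prod : Filter.Tendsto
    (fun N : ℕ => risingFactorial (1/2) (N+1) * risingFactorial (2/3) (N+1) / (risingFactorial (5/6) (N+1) * risingFactorial (1/3) (N+1))) Filter.atTop
      (nhds ((2:ℝ)^((1:ℝ)/3))) := by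
  have g : ∀ s : ℝ, 0 < s → 0 < Real.Gamma s := fun s hs => Real.Gamma_pos_of_pos hs
  have val : Real.Gamma (5/6) * Real.Gamma (1/3) / (Real.Gamma (1/2) * Real.Gamma (2/3))
      = (2:ℝ)^((1:ℝ)/3) := by
    have d := Real.Gamma_mul_Gamma_add_half (1/3)
    rw [show (1/3 + 1/2 : ℝ) = 5/6 by norm_num, show (2 * (1/3) : ℝ) = 2/3 by norm_num,
      show (1 - 2/3 : ℝ) = 1/3 by norm_num] at d
    rw [mul_comm (Real.Gamma (5/6)), d, Real.Gamma_one_half_eq]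
    have := (g (2/3) (by norm_num)).ne'
    have h2 : √Real.pi ≠ 0 := (Real.sqrt_pos.2 Real.pi_pos).ne'
    field_simp
  rw [← val]
  have t := fun s : ℝ => Real.GammaSeq_tendsto_Gamma s
  have l := ((t (5/6)).mul (t (1/3))).div ((t (1/2)).mul (t (2/3)))
    (mul_pos (g _ (by norm_num)) (g _ (by norm_num))).ne'
  refine l.congr' ?_
  filter_upwards [Filter.eventually_ge_atTop 1] with N hN
  have hN' : (0:ℝ) < N := by exact_mod_cast hN
  simp only [Pi.div_apply, Pi.mul_apply, rf_gammaSeq]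
  have h1 := (rf_pos (1/2) (by norm_num) (N+1)).ne'
  have h2 := (rf_pos (2/3) (by norm_num) (N+1)).ne'
  have h3 := (rf_pos (5/6) (by norm_num) (N+1)).ne'
  have h4 := (rf_pos (1/3) (by norm_num) (N+1)).ne'
  have hf : (N.factorial : ℝ) ≠ 0 := by positivity
  have e : (N:ℝ)^((5:ℝ)/6) * (N:ℝ)^((1:ℝ)/3) = (N:ℝ)^((1:ℝ)/2) * (N:ℝ)^((2:ℝ)/3) := by
    rw [← Real.rpow_add hN', ← Real.rpow_add hN']; norm_num
  have p1 : (N:ℝ)^((1:ℝ)/2) ≠ 0 := by positivity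
  have p2 : (N:ℝ)^((2:ℝ)/3) ≠ 0 := by positivity
  rw [div_mul_div_comm, div_mul_div_comm, div_div_div_eq, div_eq_div_iff (by positivity) (by positivity)]
  linear_combination (N.factorial : ℝ)^2 * risingFactorial (1/2) (N+1) * risingFactorial (2/3) (N+1) * risingFactorial (5/6) (N+1) * risingFactorial (1/3) (N+1) * e

lemma gauss_value : ∑' k, gaussT (5/6) k = (2:ℝ)^((1:ℝ)/3) := by
  have h1 := gauss_prod.mul ((Filter.tendsto_add_atTop_iff_nat 1).2 gauss_tail)
  rw [mul_one] at h1
  refine tendsto_nhds_unique ?_ h1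
  have : (fun N : ℕ => risingFactorial (1/2) (N+1) * risingFactorial (2/3) (N+1) / (risingFactorial (5/6) (N+1) * risingFactorial (1/3) (N+1)) *
      ∑' k, gaussT (5/6 + (N+1:ℕ)) k) = fun N => ∑' k, gaussT (5/6) k := by
    funext N
    exact (gauss_iter (N+1)).symm
  rw [this]
  exact tendsto_const_nhds

/-- The WZ function. -/
def wzF (n k : ℕ) : ℝ := (-1)^n * (risingFactorial (1/3) (k+n) * risingFactorial (1/6) (k+2*n) /
  (risingFactorial 1 (k+2*n) * risingFactorial (5/6) (k+2*n))) * (risingFactorial (2/3) n * risingFactorial (1/2) n / risingFactorial (1/3) n)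

lemma wzF_zero (k : ℕ) : wzF 0 k = gaussT (5/6) k := by simp [wzF, gaussT, rf_zero]

lemma wzF_n (n k : ℕ) : wzF (n+1) k = wzF n k *
    (-((1/3 + k + n) * (1/6 + k + 2*n) * (1/6 + k + 2*n + 1) * (2/3+n) * (1/2+n) /
      ((1 + k + 2*n) * (2 + k + 2*n) * (5/6 + k + 2*n) * (5/6 + k + 2*n + 1) * (1/3+n)))) := by
  have h3 := (rf_pos 1 (by norm_num) (k+2*n)).ne'
  have h4 := (rf_pos (5/6) (by norm_num) (k+2*n)).ne'
  have h5 := (rf_pos (1/3) (by norm_num) n).ne'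
  have a1 : (1 + (k:ℝ) + 2*n) ≠ 0 := by positivity
  have a2 : (2 + (k:ℝ) + 2*n) ≠ 0 := by positivity
  have a3 : (5/6 + (k:ℝ) + 2*n) ≠ 0 := by positivity
  have a4 : (5/6 + (k:ℝ) + 2*n+1) ≠ 0 := by positivity
  have a5 : (1/3 + (n:ℝ)) ≠ 0 := by positivity
  unfold wzF
  rw [show k + (n+1) = (k+n)+1 by ring, show k + 2*(n+1) = (k+2*n)+1+1 by ring]
  simp only [rf_succ]
  push_cast
  rw [show (1:ℝ) + (k + 2*n + 1) = 2 + k + 2*n by ring,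
    show (1:ℝ) + (k + 2*n) = 1 + k + 2*n by ring,
    show (5/6:ℝ) + (k + 2*n + 1) = 5/6 + k + 2*n + 1 by ring,
    show (5/6:ℝ) + (k + 2*n) = 5/6 + k + 2*n by ring]
  generalize risingFactorial (1/3) (k+n) = x1
  generalize risingFactorial (1/6) (k+2*n) = x2
  generalize risingFactorial 1 (k+2*n) = x3 at *
  generalize risingFactorial (5/6) (k+2*n) = x4 at *
  generalize risingFactorial (1/3) n = x5 at *
  field_simp
  ring

lemma wzF_k (n k : ℕ) : wzF n (k+1) = wzF n k *
    ((1/3 + k + n) * (1/6 + k + 2*n) / ((1 + k + 2*n) * (5/6 + k + 2*n))) := by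
  have h3 := (rf_pos 1 (by norm_num) (k+2*n)).ne'
  have h4 := (rf_pos (5/6) (by norm_num) (k+2*n)).ne'
  have h5 := (rf_pos (1/3) (by norm_num) n).ne'
  have a1 : (1 + (k:ℝ) + 2*n) ≠ 0 := by positivity
  have a3 : (5/6 + (k:ℝ) + 2*n) ≠ 0 := by positivity
  unfold wzF
  rw [show k + 1 + n = (k+n)+1 by ring, show k + 1 + 2*n = (k+2*n)+1 by ring]
  simp only [rf_succ]
  push_cast
  rw [show (1:ℝ) + (k + 2*n) = 1 + k + 2*n by ring,
    show (5/6:ℝ) + (k + 2*n) = 5/6 + k + 2*n by ring]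
  generalize risingFactorial (1/3) (k+n) = x1
  generalize risingFactorial (1/6) (k+2*n) = x2
  generalize risingFactorial 1 (k+2*n) = x3 at *
  generalize risingFactorial (5/6) (k+2*n) = x4 at *
  generalize risingFactorial (1/3) n = x5 at *
  field_simp
  ring

lemma wzF_abs_succ (n k : ℕ) : |wzF (n+1) k| ≤ |wzF n k| * (1/2) := by
  rw [wzF_n, abs_mul]
  refine mul_le_mul_of_nonneg_left ?_ (abs_nonneg _)
  rw [abs_neg, abs_of_nonneg (by positivity), div_le_iff₀ (by positivity)]
  have hk : (0:ℝ) ≤ k := by positivity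
  have hn : (0:ℝ) ≤ n := by positivity
  generalize (k:ℝ) = x at *
  generalize (n:ℝ) = y at *
  have e1 : (1/6 + x + 2*y) ≤ (5/6 + x + 2*y) := by linarith
  have e2 : (1/6 + x + 2*y + 1) ≤ (5/6 + x + 2*y + 1) := by linarith
  have e3 : (2/3+y) * (1/2+y) ≤ (1+y) * (1/3+y) := by nlinarith
  have e4 : (1/3+x+y) * (1+y) ≤ 1/2 * ((1+x+2*y) * (2+x+2*y)) := by nlinarith [mul_nonneg hk hn]
  calc (1/3 + x + y) * (1/6 + x + 2*y) * (1/6 + x + 2*y + 1) * (2/3+y) * (1/2+y)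
      = (1/3 + x + y) * ((1/6 + x + 2*y) * (1/6 + x + 2*y + 1)) * ((2/3+y) * (1/2+y)) := by ring
    _ ≤ (1/3 + x + y) * ((5/6 + x + 2*y) * (5/6 + x + 2*y + 1)) * ((1+y) * (1/3+y)) := by gcongr
    _ = ((1/3+x+y) * (1+y)) * ((5/6 + x + 2*y) * (5/6 + x + 2*y + 1) * (1/3+y)) := by ring
    _ ≤ (1/2 * ((1+x+2*y) * (2+x+2*y))) * ((5/6 + x + 2*y) * (5/6 + x + 2*y + 1) * (1/3+y)) := by gcongr
    _ = _ := by ring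

lemma wzF_abs (n k : ℕ) : |wzF n k| ≤ gaussT (5/6) k * (1/2)^n := by
  induction n with
  | zero =>
    rw [wzF_zero, abs_of_pos (gaussT_pos _ (by norm_num) k)]; simp
  | succ n ih =>
    refine (wzF_abs_succ n k).trans ?_
    rw [pow_succ, ← mul_assoc]
    gcongr

lemma wzF_summable (n : ℕ) : Summable (wzF n) :=
  Summable.of_norm_bounded (gaussT_summable.mul_right ((1/2)^n)) (fun k => wzF_abs n k)

/-- The WZ certificate. -/
def wzR (n k : ℕ) : ℝ := ((n + 1/2 + (k + 2*n)) -
  (n+2/3)*(n+1/2)*(1/6+k+2*n)/((1+k+2*n)*(5/6+k+2*n)))/(1/3+n)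

lemma wz_gen (A B C P Q M x y f : ℝ) (hP : P = 1 - A) (hQ : Q = C - A) (hM : M = C - A - B)
    (a1 : 1 + x + 2*y ≠ 0) (a2 : 2 + x + 2*y ≠ 0) (a3 : C + x + 2*y ≠ 0)
    (a4 : C + x + 2*y + 1 ≠ 0) (a5 : M + y ≠ 0) :
    f * (-((A + x + y) * (B + x + 2*y) * (B + x + 2*y + 1) * (P+y) * (Q+y) /
      ((1 + x + 2*y) * (2 + x + 2*y) * (C + x + 2*y) * (C + x + 2*y + 1) * (M+y)))) - f =
    f * ((A + x + y) * (B + x + 2*y) / ((1 + x + 2*y) * (C + x + 2*y))) *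
      (((y + Q + (x + 1 + 2*y)) -
        (y+P)*(y+Q)*(B+(x+1)+2*y)/((2+x+2*y)*(C+x+2*y+1)))/(M+y))
    - f * (((y + Q + (x + 2*y)) -
        (y+P)*(y+Q)*(B+x+2*y)/((1+x+2*y)*(C+x+2*y)))/(M+y)) := by
  generalize e4 : C + x + 2*y + 1 = d4 at *
  generalize e3 : C + x + 2*y = d3 at *
  generalize e2 : 2 + x + 2*y = d2 at *
  generalize e1 : 1 + x + 2*y = d1 at *
  generalize e5 : M + y = d5 at *
  field_simp
  subst e1 e2 e3 e4 e5 hP hQ hM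
  ring

lemma wz (n k : ℕ) :
    wzF (n+1) k - wzF n k = wzF n (k+1) * wzR n (k+1) - wzF n k * wzR n k := by
  rw [wzF_n, wzF_k]
  unfold wzR
  generalize wzF n k = f
  have a1 : (1 + (k:ℝ) + 2*n) ≠ 0 := by positivity
  have a2 : (2 + (k:ℝ) + 2*n) ≠ 0 := by positivity
  have a3 : (5/6 + (k:ℝ) + 2*n) ≠ 0 := by positivity
  have a4 : (5/6 + (k:ℝ) + 2*n+1) ≠ 0 := by positivity
  have a5 : (1/3 + (n:ℝ)) ≠ 0 := by positivity
  push_cast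
  rw [show (1:ℝ) + (k + 1) + 2*n = 2 + k + 2*n by ring,
    show (5/6:ℝ) + (k + 1) + 2*n = 5/6 + k + 2*n + 1 by ring]
  exact wz_gen (1/3) (1/6) (5/6) (2/3) (1/2) (1/3) k n f (by norm_num) (by norm_num) (by norm_num)
    a1 a2 a3 a4 a5

lemma wzR_bound (n k : ℕ) : |wzR n k| ≤ (20 * ((n:ℝ)+1)^2) * (k+1) := by
  unfold wzR
  have hk : (0:ℝ) ≤ k := by positivity
  have hn : (0:ℝ) ≤ n := by positivity
  generalize (k:ℝ) = x at *
  generalize (n:ℝ) = y at *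
  rw [abs_div, abs_of_pos (show 0 < 1/3 + y by positivity), div_le_iff₀ (by positivity)]
  have q : (1/6+x+2*y)/((1+x+2*y)*(5/6+x+2*y)) ≤ 1 := by
    rw [div_le_one (by positivity)]; nlinarith [mul_nonneg hk hn]
  have q0 : 0 ≤ (1/6+x+2*y)/((1+x+2*y)*(5/6+x+2*y)) := by positivity
  rw [mul_div_assoc]
  generalize (1/6+x+2*y)/((1+x+2*y)*(5/6+x+2*y)) = q' at *
  have w : 0 ≤ (y+2/3)*(y+1/2) := by positivity
  have w1 := mul_nonneg w q0
  have w2 := mul_le_mul_of_nonneg_left q w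
  have m1 := mul_nonneg hk hn
  have m2 := mul_nonneg hn hn
  have m3 := mul_nonneg m1 hn
  have m4 := mul_nonneg m2 hn
  have m5 := mul_nonneg hk m4
  rw [abs_le]
  constructor <;> nlinarith

lemma wz_lim (n : ℕ) : Filter.Tendsto (fun k => wzF n k * wzR n k) Filter.atTop (nhds 0) := by
  rw [tendsto_zero_iff_abs_tendsto_zero]
  have h := gaussT_lim.const_mul ((1/2)^n * (20 * ((n:ℝ)+1)^2))
  rw [mul_zero] at h
  refine squeeze_zero (fun k => abs_nonneg _) (fun k => ?_) h
  rw [Function.comp, abs_mul]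
  have hp := gaussT_pos (5/6) (by norm_num) k
  calc |wzF n k| * |wzR n k| ≤ (gaussT (5/6) k * (1/2)^n) * ((20 * ((n:ℝ)+1)^2) * (k+1)) :=
        mul_le_mul (wzF_abs n k) (wzR_bound n k) (abs_nonneg _) (by positivity)
    _ = _ := by ring

lemma wz_sum (n : ℕ) : wzF n 0 * wzR n 0 = ∑' k, wzF n k - ∑' k, wzF (n+1) k := by
  have key := tele (fun k => wzF (n+1) k - wzF n k) (fun k => wzF n k * wzR n k)
    ((wzF_summable (n+1)).sub (wzF_summable n)) (wz n) (wz_lim n)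
  rw [(wzF_summable (n+1)).tsum_sub (wzF_summable n)] at key
  linarith

lemma wzS_bound (n : ℕ) : |∑' k, wzF n k| ≤ (2:ℝ)^((1:ℝ)/3) * (1/2)^n := by
  rw [← gauss_value, ← tsum_mul_right]
  rw [← Real.norm_eq_abs]
  exact tsum_of_norm_bounded (gaussT_summable.mul_right ((1/2)^n)).hasSum (fun k => wzF_abs n k)

lemma wz_total : HasSum (fun n => wzF n 0 * wzR n 0) ((2:ℝ)^((1:ℝ)/3)) := by
  have geo : Summable (fun n : ℕ => (1/2:ℝ)^n) := summable_geometric_of_lt_one (by norm_num) (by norm_num)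
  have hs : Summable (fun n => wzF n 0 * wzR n 0) := by
    refine Summable.of_norm_bounded (geo.mul_left (2 * (2:ℝ)^((1:ℝ)/3))) (fun n => ?_)
    rw [wz_sum, Real.norm_eq_abs]
    refine (abs_sub _ _).trans ?_
    have h1 := wzS_bound n
    have h2 := wzS_bound (n+1)
    have h3 : (2:ℝ)^((1:ℝ)/3) * (1/2)^(n+1) ≤ (2:ℝ)^((1:ℝ)/3) * (1/2)^n := by
      gcongr ?_ * ?_
      exact pow_le_pow_of_le_one (by norm_num) (by norm_num) (by omega)
    linarith
  rw [hs.hasSum_iff_tendsto_nat]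
  have e : ∀ n, ∑ i ∈ Finset.range n, wzF i 0 * wzR i 0 = (2:ℝ)^((1:ℝ)/3) - ∑' k, wzF n k := by
    intro n
    simp_rw [wz_sum]
    rw [Finset.sum_range_sub' (fun n => ∑' k, wzF n k)]
    simp_rw [wzF_zero]
    rw [gauss_value]
  simp_rw [e]
  have l : Filter.Tendsto (fun n => ∑' k, wzF n k) Filter.atTop (nhds 0) := by
    rw [tendsto_zero_iff_abs_tendsto_zero]
    have h := geo.tendsto_atTop_zero.const_mul ((2:ℝ)^((1:ℝ)/3))
    rw [mul_zero] at h
    exact squeeze_zero (fun k => abs_nonneg _) wzS_bound h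
  simpa using l.const_sub ((2:ℝ)^((1:ℝ)/3))

lemma term_aux (k : ℕ) : (-1/4 : ℝ) ^ k * (risingFactorial (1/12) k * risingFactorial (7/12) k * risingFactorial (2/3) k) /
        (risingFactorial (11/12) k * risingFactorial (1) k * risingFactorial (17/12) k) = wzF k 0 * (5 / (6 * (2 * k + 5/6))) := by
  induction k with
  | zero => norm_num [wzF, rf_zero]
  | succ k ih =>
    rw [wzF_n]
    simp only [rf_succ, pow_succ]
    have h3 := (rf_pos 1 (by norm_num) k).ne'
    have h4 := (rf_pos (11/12) (by norm_num) k).ne'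
    have h5 := (rf_pos (17/12) (by norm_num) k).ne'
    have a0 : (0:ℝ) ≤ k := by positivity
    have split : ∀ p a b c d e f x1 x2 x3 y1 y2 y3 : ℝ,
        p * (-1/4) * (a * x1 * (b * x2) * (c * x3)) / (d * y1 * (e * y2) * (f * y3)) =
        (p * (a * b * c) / (d * e * f)) * (-1/4 * (x1 * x2 * x3) / (y1 * y2 * y3)) := by
      intros
      rw [div_mul_div_comm]
      congr 1 <;> ring
    rw [split, ih, mul_assoc (wzF k 0), mul_assoc (wzF k 0)]
    congr 1
    push_cast
    generalize (k:ℝ) = x at *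
    have b1 : 2 * x + 5/6 ≠ 0 := by positivity
    have b2 : 11/12 + x ≠ 0 := by positivity
    have b3 : 1 + x ≠ 0 := by positivity
    have b4 : 17/12 + x ≠ 0 := by positivity
    have b5 : 1 + 0 + 2 * x ≠ 0 := by positivity
    have b6 : 2 + 0 + 2 * x ≠ 0 := by positivity
    have b7 : 5/6 + 0 + 2 * x ≠ 0 := by positivity
    have b8 : 5/6 + 0 + 2 * x + 1 ≠ 0 := by positivity
    have b9 : 1/3 + x ≠ 0 := by positivity
    have b10 : 2 * (x+1) + 5/6 ≠ 0 := by positivity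
    rw [← neg_div, div_mul_div_comm, div_mul_div_comm, div_eq_div_iff (by positivity) (by positivity)]
    ring

lemma term_eq (k : ℕ) : (-1/4 : ℝ) ^ k * (risingFactorial (1/12) k * risingFactorial (7/12) k * risingFactorial (2/3) k) /
        (risingFactorial (11/12) k * risingFactorial (1) k * risingFactorial (17/12) k) * (60 * (k:ℝ) + 13) =
      10 * (wzF k 0 * wzR k 0) := by
  rw [term_aux, mul_assoc (wzF k 0), mul_left_comm (10:ℝ)]
  congr 1
  unfold wzR
  push_cast
  have a0 : (0:ℝ) ≤ k := by positivity
  generalize (k:ℝ) = x at *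
  have b1 : 2 * x + 5/6 ≠ 0 := by positivity
  have b5 : 1 + 0 + 2 * x ≠ 0 := by positivity
  have b7 : 5/6 + 0 + 2 * x ≠ 0 := by positivity
  have b9 : 1/3 + x ≠ 0 := by positivity
  rw [sub_div' (by positivity), div_div, div_mul_eq_mul_div, ← mul_div_assoc,
    div_eq_div_iff (by positivity) (by positivity)]
  ring

end

theorem stmt_6 :
    10 * (2 : ℝ) ^ ((1 : ℝ)/3) =
      ∑' k : ℕ, (-1/4 : ℝ) ^ k * (risingFactorial (1/12) k * risingFactorial (7/12) k * risingFactorial (2/3) k) /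
        (risingFactorial (11/12) k * risingFactorial (1) k * risingFactorial (17/12) k) * (60 * (k:ℝ) + 13) := by
  simp_rw [term_eq]
  exact ((wz_total.mul_left 10).tsum_eq).symm
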